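/- arXiv:2506.10727 — 2 statements merged into one kernel-verified Lean document; each statement's English description precedes it below -/
import Mathlib

section
/- (Multiplicative double coset formula in the ghost.) Let G be a finite group, let H, L ≤ K be subgroups of G, and let a : Subgroup G → ℤ be a function satisfying a(h⁻¹Ih) = a(I) for every subgroup I ≤ H and every h ∈ H. Then for every subgroup J ≤ L: ∏_{[k] ∈ J\K/H} a(k⁻¹Jk ∩ H) = ∏_{[γ] ∈ L\K/H} ∏_{[ℓ] ∈ J\L/(L ∩ ᵞH)} a((ℓγ)⁻¹J(ℓγ) ∩ H), where the products run over the indicated double coset spaces with arbitrarily chosen representatives (the products do not depend on these choices, by the invariance hypothesis on a). -/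
/-!
For a homomorphism `φ : Λ →* Γ` and subgroups `J ≤ Λ`, `H ≤ Γ`, each double coset `φ(Λ) γ H` splits
into double cosets of `φ(J)` and `H`. The elements `φ(ℓ) γ` and `φ(ℓ') γ` lie in the same one
exactly when `ℓ` and `ℓ'` agree in `J \ Λ / φ⁻¹(γ H γ⁻¹)`, so `(γ, ℓ) ↦ φ(ℓ) γ` identifies
`∐_γ J \ Λ / φ⁻¹(γ H γ⁻¹)` with `φ(J) \ Γ / H`. The double coset formula is this reindexing for the
inclusion `L ≤ K`, applied to the function `k ↦ a (k⁻¹ J k ∩ H)`.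
-/

section DoubleCosetDecomposition

open DoubleCoset

variable {Λ Γ : Type*} [Group Λ] [Group Γ] (φ : Λ →* Γ) (J : Subgroup Λ) (H : Subgroup Γ)

theorem mem_comap_map_conj_iff (γ : Γ) (ℓ : Λ) :
    ℓ ∈ (H.map (MulAut.conj γ).toMonoidHom).comap φ ↔ γ⁻¹ * φ ℓ * γ ∈ H := by
  rw [Subgroup.mem_comap, Subgroup.mem_map_equiv, MulAut.conj_symm_apply]

theorem mk_map_mul_eq_mk_map_mul_iff (γ : Γ) (ℓ ℓ' : Λ) :
    mk (J.map φ) H (φ ℓ * γ) = mk (J.map φ) H (φ ℓ' * γ) ↔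
      mk J ((H.map (MulAut.conj γ).toMonoidHom).comap φ) ℓ =
        mk J ((H.map (MulAut.conj γ).toMonoidHom).comap φ) ℓ' := by
  rw [DoubleCoset.eq, DoubleCoset.eq]
  constructor
  · rintro ⟨_, ⟨j, hj, rfl⟩, h, hh, hℓ'⟩
    have h_eq : γ⁻¹ * φ ((j * ℓ)⁻¹ * ℓ') * γ = h := by
      rw [map_mul, mul_assoc, mul_assoc, hℓ', map_inv, map_mul]
      group
    exact ⟨j, hj, (j * ℓ)⁻¹ * ℓ', (mem_comap_map_conj_iff φ H γ _).2 (h_eq ▸ hh), by group⟩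
  · rintro ⟨j, hj, m, hm, rfl⟩
    refine ⟨φ j, Subgroup.mem_map_of_mem φ hj, _, (mem_comap_map_conj_iff φ H γ m).1 hm, ?_⟩
    rw [map_mul, map_mul]
    group

theorem mk_range_map_mul (ℓ : Λ) (γ : Γ) : mk φ.range H (φ ℓ * γ) = mk φ.range H γ :=
  Eq.symm <| (DoubleCoset.eq _ _ _ _).2
    ⟨φ ℓ, MonoidHom.mem_range.2 ⟨ℓ, rfl⟩, 1, H.one_mem, (mul_one _).symm⟩

variable {H} in
theorem mk_eq_mk_of_le {A B : Subgroup Γ} (hAB : A ≤ B) {x y : Γ} (h : mk A H x = mk A H y) :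
    mk B H x = mk B H y := by
  obtain ⟨a, ha, h, hh, hy⟩ := (DoubleCoset.eq _ _ _ _).1 h
  exact (DoubleCoset.eq _ _ _ _).2 ⟨a, hAB ha, h, hh, hy⟩

/-- The map `∐_γ J \ Λ / φ⁻¹(γ H γ⁻¹) → φ(J) \ Γ / H`, `(γ, ℓ) ↦ φ(ℓ) γ`, that refines the double
cosets of `φ(Λ)` and `H`, where `γ` and `ℓ` are the representatives chosen by `Quotient.out`. -/
noncomputable def refineDoubleCoset
    (p : Σ d : DoubleCoset.Quotient (φ.range : Set Γ) (H : Set Γ),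
      DoubleCoset.Quotient (J : Set Λ)
        ((H.map (MulAut.conj d.out).toMonoidHom).comap φ : Set Λ)) :
    DoubleCoset.Quotient (J.map φ : Set Γ) (H : Set Γ) :=
  mk (J.map φ) H (φ p.2.out * p.1.out)

theorem refineDoubleCoset_injective : Function.Injective (refineDoubleCoset φ J H) := by
  rintro ⟨d, y⟩ ⟨d', y'⟩ hp
  obtain rfl : d = d' := by
    have h_range := mk_eq_mk_of_le (J.map_le_range φ) hp
    rwa [mk_range_map_mul, mk_range_map_mul, out_eq', out_eq'] at h_range
  have hy := (mk_map_mul_eq_mk_map_mul_iff φ J H d.out y.out y'.out).1 hp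
  rw [out_eq', out_eq'] at hy
  rw [hy]

theorem refineDoubleCoset_surjective : Function.Surjective (refineDoubleCoset φ J H) := by
  intro z
  let d := mk φ.range H z.out
  obtain ⟨_, ⟨ℓ, rfl⟩, h, hh, hz⟩ := (DoubleCoset.eq _ _ _ _).1 (out_eq' φ.range H d)
  refine ⟨⟨d, mk J _ ℓ⟩, ?_⟩
  calc mk (J.map φ) H (φ (mk J _ ℓ).out * d.out)
      = mk (J.map φ) H (φ ℓ * d.out) :=
        (mk_map_mul_eq_mk_map_mul_iff φ J H _ _ _).2 (out_eq' _ _ _)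
    _ = mk (J.map φ) H z.out :=
        (DoubleCoset.eq _ _ _ _).2 ⟨1, one_mem _, h, hh, by rw [one_mul, hz]⟩
    _ = z := out_eq' _ _ z

end DoubleCosetDecomposition

section Finprod

variable {M : Type*} [CommMonoid M]

theorem finprod_sigma_of_hasFiniteMulSupport {α : Type*} {β : α → Type*} (f : (Σ a, β a) → M)
    (hf : f.HasFiniteMulSupport) : ∏ᶠ p, f p = ∏ᶠ (a) (b), f ⟨a, b⟩ := by
  classical
  have h_fiber (a : α) : (fun b ↦ f ⟨a, b⟩).HasFiniteMulSupport :=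
    hf.preimage sigma_mk_injective.injOn
  have h_base : (Function.mulSupport fun a ↦ ∏ᶠ b, f ⟨a, b⟩) ⊆ hf.toFinset.image Sigma.fst := by
    intro a ha
    obtain ⟨b, hb⟩ : ∃ b, f ⟨a, b⟩ ≠ 1 := by
      by_contra! h_one
      exact ha (finprod_eq_one_of_forall_eq_one h_one)
    exact Finset.mem_image.2 ⟨⟨a, b⟩, hf.mem_toFinset.2 hb, rfl⟩
  have h_total : Function.mulSupport f ⊆
      (hf.toFinset.image Sigma.fst).sigma fun a ↦ (h_fiber a).toFinset := by
    rintro ⟨a, b⟩ hab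
    exact Finset.mem_sigma.2 ⟨Finset.mem_image.2 ⟨⟨a, b⟩, hf.mem_toFinset.2 hab, rfl⟩,
      (h_fiber a).mem_toFinset.2 hab⟩
  rw [finprod_eq_prod_of_mulSupport_subset _ h_total, Finset.prod_sigma,
    finprod_eq_prod_of_mulSupport_subset _ h_base]
  exact Finset.prod_congr rfl fun a _ ↦ (finprod_eq_prod _ (h_fiber a)).symm

variable {Λ Γ : Type*} [Group Λ] [Group Γ]

theorem apply_out_mk_of_forall_mul_mul {α : Type*} (A B : Subgroup Γ) (f : Γ → α)
    (hf : ∀ a ∈ A, ∀ b ∈ B, ∀ g, f (a * g * b) = f g) (g : Γ) :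
    f (DoubleCoset.mk A B g).out = f g := by
  obtain ⟨a, b, ha, hb, hg⟩ := DoubleCoset.mk_out_eq_mul A B g
  rw [hg, hf a ha b hb]

theorem finprod_doubleCoset_map_eq_finprod_finprod (φ : Λ →* Γ) (J : Subgroup Λ) (H : Subgroup Γ)
    (f : Γ → M) (hf : ∀ j ∈ J.map φ, ∀ h ∈ H, ∀ g, f (j * g * h) = f g)
    (hfin : (fun z : DoubleCoset.Quotient (J.map φ : Set Γ) (H : Set Γ) ↦
      f z.out).HasFiniteMulSupport) :
    ∏ᶠ z : DoubleCoset.Quotient (J.map φ : Set Γ) (H : Set Γ), f z.out =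
      ∏ᶠ (d : DoubleCoset.Quotient (φ.range : Set Γ) (H : Set Γ))
        (y : DoubleCoset.Quotient (J : Set Λ)
          ((H.map (MulAut.conj d.out).toMonoidHom).comap φ : Set Λ)), f (φ y.out * d.out) := by
  have h_apply p : f (refineDoubleCoset φ J H p).out = f (φ p.2.out * p.1.out) :=
    apply_out_mk_of_forall_mul_mul _ H f hf _
  have h_inj := refineDoubleCoset_injective φ J H
  rw [← finprod_comp _ ⟨h_inj, refineDoubleCoset_surjective φ J H⟩,
    finprod_sigma_of_hasFiniteMulSupport _ (hfin.preimage h_inj.injOn)]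
  exact finprod_congr fun d ↦ finprod_congr fun y ↦ h_apply ⟨d, y⟩

end Finprod

section SubgroupConjugation

variable {G : Type*} [Group G]

theorem map_conj_mul_mul_inv_inf (J H : Subgroup G) {j h : G} (hj : j ∈ J) (hh : h ∈ H) (k : G) :
    J.map (MulAut.conj (j * k * h)⁻¹).toMonoidHom ⊓ H =
      (J.map (MulAut.conj k⁻¹).toMonoidHom ⊓ H).map (MulAut.conj h⁻¹).toMonoidHom := by
  ext x
  have h_conj : j * k * h * x * (j * k * h)⁻¹ = j * (k * (h * x * h⁻¹) * k⁻¹) * j⁻¹ := by group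
  simp only [Subgroup.mem_inf, Subgroup.mem_map_equiv, MulAut.conj_symm_apply, inv_inv]
  rw [h_conj, J.mul_mem_cancel_right (J.inv_mem hj), J.mul_mem_cancel_left hj,
    H.mul_mem_cancel_right (H.inv_mem hh), H.mul_mem_cancel_left hh]

theorem map_inclusion_subgroupOf {J L K : Subgroup G} (hJ : J ≤ L) (hL : L ≤ K) :
    (J.subgroupOf L).map (Subgroup.inclusion hL) = J.subgroupOf K := by
  apply Subgroup.map_injective K.subtype_injective
  rw [Subgroup.map_map, Subgroup.subtype_comp_inclusion, Subgroup.map_subgroupOf_eq_of_le hJ,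
    Subgroup.map_subgroupOf_eq_of_le (hJ.trans hL)]

theorem comap_inclusion_map_conj_subgroupOf (H : Subgroup G) {L K : Subgroup G} (hL : L ≤ K)
    (k : K) :
    ((H.subgroupOf K).map (MulAut.conj k).toMonoidHom).comap (Subgroup.inclusion hL) =
      (L ⊓ H.map (MulAut.conj (k : G)).toMonoidHom).subgroupOf L := by
  ext ℓ
  rw [mem_comap_map_conj_iff, Subgroup.mem_subgroupOf, Subgroup.mem_subgroupOf, Subgroup.mem_inf,
    and_iff_right ℓ.2, Subgroup.mem_map_equiv, MulAut.conj_symm_apply]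
  rfl

theorem stmt7_general {M : Type*} [CommMonoid M] (K H L : Subgroup G) (hL : L ≤ K)
    (a : Subgroup G → M)
    (ha : ∀ I : Subgroup G, I ≤ H → ∀ h ∈ H, a (I.map (MulAut.conj h⁻¹).toMonoidHom) = a I)
    (J : Subgroup G) (hJ : J ≤ L)
    (hfin : (fun z : DoubleCoset.Quotient (J.subgroupOf K : Set K) (H.subgroupOf K : Set K) ↦
      a (J.map (MulAut.conj (z.out : G)⁻¹).toMonoidHom ⊓ H)).HasFiniteMulSupport) :
    ∏ᶠ z : DoubleCoset.Quotient (J.subgroupOf K : Set K) (H.subgroupOf K : Set K),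
        a (J.map (MulAut.conj (z.out : G)⁻¹).toMonoidHom ⊓ H) =
      ∏ᶠ (d : DoubleCoset.Quotient (L.subgroupOf K : Set K) (H.subgroupOf K : Set K))
        (y : DoubleCoset.Quotient (J.subgroupOf L : Set L)
          ((L ⊓ H.map (MulAut.conj (d.out : G)).toMonoidHom).subgroupOf L : Set L)),
        a (J.map (MulAut.conj ((y.out : G) * (d.out : G))⁻¹).toMonoidHom ⊓ H) := by
  let f (k : K) : M := a (J.map (MulAut.conj (k : G)⁻¹).toMonoidHom ⊓ H)
  have hf : ∀ j ∈ J.subgroupOf K, ∀ h ∈ H.subgroupOf K, ∀ k, f (j * k * h) = f k := by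
    intro j hj h hh k
    exact (congrArg a (map_conj_mul_mul_inv_inf J H hj hh k)).trans (ha _ inf_le_right h hh)
  have h_formula := finprod_doubleCoset_map_eq_finprod_finprod
    (Subgroup.inclusion hL) (J.subgroupOf L) (H.subgroupOf K) f
  rw [map_inclusion_subgroupOf hJ hL, Subgroup.inclusion_range] at h_formula
  refine (h_formula hf hfin).trans (finprod_congr fun d ↦ ?_)
  rw [comap_inclusion_map_conj_subgroupOf]
  rfl

end SubgroupConjugation

/-- Multiplicative double coset formula in the ghost: for subgroups
`H, L ≤ K` of `G`, `a : Subgroup G → ℤ` invariant under `H`-conjugation on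
subgroups of `H`, and `J ≤ L`:
`∏_{[k] ∈ J\K/H} a(J^k ∩ H) = ∏_{[γ] ∈ L\K/H} ∏_{[ℓ] ∈ J\L/(L∩ᵞH)} a(J^{ℓγ} ∩ H)`. -/
theorem stmt7 {G : Type*} [Group G] [Finite G]
    (K H L : Subgroup G) (hH : H ≤ K) (hL : L ≤ K)
    (a : Subgroup G → ℤ)
    (ha : ∀ I : Subgroup G, I ≤ H → ∀ h ∈ H,
      a (I.map (MulAut.conj h⁻¹).toMonoidHom) = a I)
    (J : Subgroup G) (hJ : J ≤ L) :
    (∏ᶠ z : DoubleCoset.Quotient (↑(J.subgroupOf K) : Set K) (↑(H.subgroupOf K) : Set K),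
        a (J.map (MulAut.conj ((z.out : K) : G)⁻¹).toMonoidHom ⊓ H))
    = ∏ᶠ d : DoubleCoset.Quotient (↑(L.subgroupOf K) : Set K) (↑(H.subgroupOf K) : Set K),
        ∏ᶠ y : DoubleCoset.Quotient (↑(J.subgroupOf L) : Set L)
            (↑((L ⊓ H.map (MulAut.conj ((d.out : K) : G)).toMonoidHom).subgroupOf L) : Set L),
          a (J.map (MulAut.conj (((y.out : L) : G) * ((d.out : K) : G))⁻¹).toMonoidHom ⊓ H) := by
  have : Finite (DoubleCoset.Quotient (J.subgroupOf K : Set K) (H.subgroupOf K : Set K)) :=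
    Quotient.finite _
  exact stmt7_general K H L hL a ha J hJ (Set.toFinite _)
end

section
/- Let G be a finite group and let X and Y be finite G-sets such that |X^H| = |Y^H| for every subgroup H ≤ G. Then X and Y are isomorphic as G-sets: there exists a bijection e : X → Y with e(g·x) = g·e(x) for all g ∈ G and x ∈ X. -/
/-!
A point `x : X` whose stabilizer `K` is maximal among the stabilizers of points of `X` is fixed by
`K`, so `K` also fixes some `y : Y`; the stabilizer of `y` in turn fixes some point of `X`, and
maximality forces it to be `K`. Hence the orbits of `x` and `y` are both isomorphic to `G ⧸ K`.
Fixed-point counts are additive over disjoint unions, so the complements of these two orbits again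
have equal counts, and induction on `|X|` applies to them.
-/

open MulAction

/-- Isomorphism of `G`-sets, as a proposition: there is a `G`-equivariant bijection. -/
def GSetIsomorphic (G X Y : Type*) [SMul G X] [SMul G Y] : Prop :=
  ∃ e : X ≃ Y, ∀ (g : G) (x : X), e (g • x) = g • e x

namespace GSetIsomorphic

section SMul

variable {G X Y Z X' Y' : Type*} [SMul G X] [SMul G Y] [SMul G Z] [SMul G X'] [SMul G Y']

theorem symm : GSetIsomorphic G X Y → GSetIsomorphic G Y X := by
  rintro ⟨e, he⟩
  exact ⟨e.symm, fun g y ↦ by rw [e.symm_apply_eq, he, e.apply_symm_apply]⟩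

theorem trans : GSetIsomorphic G X Y → GSetIsomorphic G Y Z → GSetIsomorphic G X Z := by
  rintro ⟨e, he⟩ ⟨f, hf⟩
  exact ⟨e.trans f, fun g x ↦ by simp only [Equiv.trans_apply, he, hf]⟩

theorem sum_congr : GSetIsomorphic G X Y → GSetIsomorphic G X' Y' →
    GSetIsomorphic G (X ⊕ X') (Y ⊕ Y') := by
  rintro ⟨e, he⟩ ⟨f, hf⟩
  exact ⟨e.sumCongr f, by rintro g (x | x) <;> simp [he, hf]⟩

theorem of_isEmpty [IsEmpty X] [IsEmpty Y] : GSetIsomorphic G X Y :=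
  ⟨Equiv.equivOfIsEmpty X Y, fun _ x ↦ isEmptyElim x⟩

end SMul

theorem sum_compl {G X : Type*} [Group G] [MulAction G X] (S : SubMulAction G X) :
    GSetIsomorphic G (S ⊕ (Sᶜ : SubMulAction G X)) X := by
  classical
  exact ⟨Equiv.Set.sumCompl (S : Set X), by rintro g (x | x) <;> rfl⟩

end GSetIsomorphic

/-- The orbit of `x` as a sub-`G`-set, so that its complement is again a `G`-set. -/
def orbitSubMulAction (G : Type*) {X : Type*} [Group G] [MulAction G X] (x : X) :
    SubMulAction G X where
  carrier := orbit G x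
  smul_mem' g _ := mem_orbit_of_mem_orbit g

section Orbit

variable {G X Y : Type*} [Group G] [MulAction G X] [MulAction G Y]

theorem gsetIsomorphic_quotient_stabilizer_orbit (x : X) :
    GSetIsomorphic G (G ⧸ stabilizer G x) (orbitSubMulAction G x) :=
  ⟨(orbitEquivQuotientStabilizer G x).symm,
    fun g q ↦ Subtype.ext (ofQuotientStabilizer_smul G x g q)⟩

theorem gsetIsomorphic_orbit_of_stabilizer_eq {x : X} {y : Y}
    (hxy : stabilizer G x = stabilizer G y) :
    GSetIsomorphic G (orbitSubMulAction G x) (orbitSubMulAction G y) := by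
  have hx := gsetIsomorphic_quotient_stabilizer_orbit (G := G) x
  rw [hxy] at hx
  exact hx.symm.trans (gsetIsomorphic_quotient_stabilizer_orbit y)

theorem card_orbitSubMulAction_compl_lt [Finite X] (x : X) :
    Nat.card ((orbitSubMulAction G x)ᶜ : SubMulAction G X) < Nat.card X :=
  Finite.card_subtype_lt (x := x) fun hx ↦ hx (mem_orbit_self x)

end Orbit

/-- The mark `φ_G^H(X) = |X^H|`, the number of `H`-fixed points of `X`. It is `0` when there are
infinitely many of them. -/
noncomputable def mark {G : Type*} [Group G] (H : Subgroup G) (X : Type*) [SMul G X] : ℕ :=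
  Nat.card {x : X // ∀ g ∈ H, g • x = x}

section Mark

variable {G X Y : Type*} [Group G]

theorem GSetIsomorphic.mark_eq [SMul G X] [SMul G Y] (h : GSetIsomorphic G X Y)
    (H : Subgroup G) : mark H X = mark H Y := by
  obtain ⟨e, he⟩ := h
  refine Nat.card_congr (e.subtypeEquiv fun x ↦ forall₂_congr fun g _ ↦ ?_)
  rw [← he, e.apply_eq_iff_eq]

theorem mark_sum [SMul G X] [SMul G Y] [Finite X] [Finite Y] (H : Subgroup G) :
    mark H (X ⊕ Y) = mark H X + mark H Y := by
  simp only [mark, ← Nat.card_sum]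
  refine Nat.card_congr (Equiv.subtypeSum.trans (Equiv.sumCongr ?_ ?_)) <;>
    exact Equiv.subtypeEquivRight fun _ ↦ by simp

variable [MulAction G X] [MulAction G Y]

theorem mark_bot : mark (⊥ : Subgroup G) X = Nat.card X :=
  Nat.card_congr (Equiv.subtypeUnivEquiv fun x g hg ↦ by rw [Subgroup.mem_bot.mp hg, one_smul])

theorem mark_pos_iff [Finite X] {H : Subgroup G} :
    0 < mark H X ↔ ∃ x : X, H ≤ stabilizer G x := by
  rw [mark, Finite.card_pos_iff, nonempty_subtype]
  rfl

theorem exists_stabilizer_le_of_mark_eq [Finite X] [Finite Y]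
    (h : ∀ H : Subgroup G, mark H X = mark H Y) (x : X) :
    ∃ y : Y, stabilizer G x ≤ stabilizer G y :=
  mark_pos_iff.mp (h _ ▸ mark_pos_iff.mpr ⟨x, le_rfl⟩)

theorem exists_stabilizer_eq_of_mark_eq [Finite X] [Finite Y] [Nonempty X]
    (h : ∀ H : Subgroup G, mark H X = mark H Y) :
    ∃ (x : X) (y : Y), stabilizer G x = stabilizer G y := by
  obtain ⟨x, hx⟩ := Set.finite_univ.exists_maximalFor (stabilizer G) (Set.univ : Set X)
    Set.univ_nonempty
  obtain ⟨y, hxy⟩ := exists_stabilizer_le_of_mark_eq h x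
  obtain ⟨x', hyx'⟩ := exists_stabilizer_le_of_mark_eq (fun H ↦ (h H).symm) y
  have hx'x : stabilizer G x' ≤ stabilizer G x := hx.2 trivial (hxy.trans hyx')
  exact ⟨x, y, hxy.antisymm (hyx'.trans hx'x)⟩

theorem mark_add_mark_compl [Finite X] (S : SubMulAction G X) (H : Subgroup G) :
    mark H S + mark H (Sᶜ : SubMulAction G X) = mark H X := by
  rw [← mark_sum, (GSetIsomorphic.sum_compl S).mark_eq]

theorem mark_compl_eq_of_gsetIsomorphic [Finite X] [Finite Y] {S : SubMulAction G X}
    {T : SubMulAction G Y} (hST : GSetIsomorphic G S T) {H : Subgroup G}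
    (h : mark H X = mark H Y) :
    mark H (Sᶜ : SubMulAction G X) = mark H (Tᶜ : SubMulAction G Y) := by
  rw [← mark_add_mark_compl S, ← mark_add_mark_compl T, hST.mark_eq] at h
  exact Nat.add_left_cancel h

theorem isEmpty_of_mark_eq [Finite Y] [IsEmpty X]
    (h : ∀ H : Subgroup G, mark H X = mark H Y) : IsEmpty Y := by
  have hcard : Nat.card X = Nat.card Y := by simpa only [mark_bot] using h ⊥
  rwa [Nat.card_of_isEmpty, eq_comm, Finite.card_eq_zero_iff] at hcard

end Mark

theorem stmt19_general {G X Y : Type*} [Group G] [Finite X] [Finite Y]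
    [MulAction G X] [MulAction G Y] (h : ∀ H : Subgroup G, mark H X = mark H Y) :
    GSetIsomorphic G X Y := by
  induction hn : Nat.card X using Nat.strong_induction_on generalizing X Y with
  | _ n ih =>
  subst hn
  cases isEmpty_or_nonempty X
  · have := isEmpty_of_mark_eq h
    exact .of_isEmpty
  · obtain ⟨x, y, hxy⟩ := exists_stabilizer_eq_of_mark_eq h
    have horbit := gsetIsomorphic_orbit_of_stabilizer_eq hxy
    have hcompl := ih _ (card_orbitSubMulAction_compl_lt x)
      (fun H ↦ mark_compl_eq_of_gsetIsomorphic horbit (h H)) rfl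
    exact (GSetIsomorphic.sum_compl _).symm.trans
      ((horbit.sum_congr hcompl).trans (.sum_compl _))

/-- If two finite `G`-sets `X` and `Y` satisfy `|X^H| = |Y^H|` for
every subgroup `H ≤ G`, then `X` and `Y` are isomorphic as `G`-sets. -/
theorem stmt19 {G X Y : Type*} [Group G] [Finite G] [Finite X] [Finite Y]
    [MulAction G X] [MulAction G Y]
    (h : ∀ H : Subgroup G,
      Nat.card {x : X // ∀ g ∈ H, g • x = x} = Nat.card {y : Y // ∀ g ∈ H, g • y = y}) :
    ∃ e : X ≃ Y, ∀ (g : G) (x : X), e (g • x) = g • e x :=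
  stmt19_general h
end
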